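/- arXiv:1505.07901 — 4 statements merged into one kernel-verified Lean document; each statement's English description precedes it below -/
import Mathlib

section
/- Let (M, d) be a compact metric space, f : M → M a continuous map, and A ⊆ M an attracting region for f. Then there exists ε > 0 such that every ε-pseudo-orbit x₀, x₁, …, x_n of f with x₀ ∈ A satisfies x_k ∈ A for every 0 ≤ k ≤ n. (In fact, for every k ≥ 1 one has x_k ∈ int(A).) -/
/-- Let `(M, d)` be a compact metric space, `f : M → M` continuous and
`A` an attracting region for `f` (`A` compact with `f(A) ⊆ int A`).  Then there is `ε > 0`
such that every `ε`-pseudo-orbit `x₀, …, x_n` of `f` with `x₀ ∈ A` satisfies `x_k ∈ A` for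
all `0 ≤ k ≤ n`, and in fact `x_k ∈ int A` for every `k ≥ 1`. -/
theorem attracting_region_traps_pseudo_orbits
    {M : Type*} [MetricSpace M] [CompactSpace M]
    (f : M → M) (hf : Continuous f)
    (A : Set M) (hAcomp : IsCompact A) (hAattr : f '' A ⊆ interior A) :
    ∃ ε > 0, ∀ (n : ℕ) (x : ℕ → M),
      x 0 ∈ A → (∀ k < n, dist (f (x k)) (x (k + 1)) < ε) →
      (∀ k ≤ n, x k ∈ A) ∧ (∀ k, 1 ≤ k → k ≤ n → x k ∈ interior A) := by
  -- `ε` is the radius of a thickening of the compact set `f(A)` that stays inside `int A`, so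
  -- one step of an `ε`-pseudo-orbit starting in `A` lands in `int A`; then induct on the time.
  obtain ⟨ε, hε, hthick⟩ :=
    (hAcomp.image hf).exists_thickening_subset_open isOpen_interior hAattr
  refine ⟨ε, hε, fun n x h0 hx => ?_⟩
  have step : ∀ k < n, x k ∈ A → x (k + 1) ∈ interior A := fun k hk hkA =>
    hthick (Metric.mem_thickening_iff.2
      ⟨f (x k), Set.mem_image_of_mem f hkA, by rw [dist_comm]; exact hx k hk⟩)
  have hA : ∀ k ≤ n, x k ∈ A := by
    intro k
    induction k with
    | zero => exact fun _ => h0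
    | succ k ih => exact fun hk => interior_subset (step k hk (ih (Nat.le_of_succ_le hk)))
  refine ⟨hA, fun k hk1 hkn => ?_⟩
  obtain ⟨j, rfl⟩ := Nat.exists_eq_add_of_le' hk1
  exact step j hkn (hA j (Nat.le_of_succ_le hkn))
end

section
/- For every K > 1 and every δ ∈ (0, 1) there exists α₀ ∈ (0, 1) such that for every α ∈ (0, α₀) there exists a C^∞ function χ : ℝ → ℝ with the following properties: (i) χ(z) = Kz for every z ∈ [−α, α]; (ii) 1 − δ ≤ χ'(z) ≤ K for every z ∈ [−1, 1]; (iii) there exists κ ∈ (0, 1) such that χ(z) = z whenever |z| ≥ 1 − κ (in particular χ restricts to an increasing diffeomorphism of [−1, 1] onto itself); (iv) max_{z ∈ [−1, 1]} |χ(z) − z| ≤ αK. -/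
/-!
The map is `χ z = z + (K - 1) * φ z * ψ z`. Here `φ` is a smooth truncation of the identity, equal to
`z` on `[-α, α]`, with slope in `[0, 1]` and `|φ| ≤ r` for `r = α K / (K - 1) > α`, and `ψ` is a fixed
cutoff, independent of `α`, equal to `1` on `[-1/2, 1/2]`, to `0` for `|z| ≥ 3/4`, and nonincreasing
in `|z|`.

The derivative is `χ' = 1 + (K - 1) * (φ' ψ + φ ψ')`. The first term lies in `[0, 1]`. The second is
nonpositive, since `φ` has the sign of `z` and `ψ'` the opposite one, which gives `χ' ≤ K`. If `C`
bounds `|ψ'|` on `[-1, 1]`, the second term is at least `-r C`, so `χ' ≥ 1 - α K C`, and this is at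
least `1 - δ` as soon as `α K C ≤ δ`. Finally `|χ z - z| ≤ (K - 1) * r = α K`.
-/

open Set

/-- A smooth truncation of the identity: the primitive, vanishing at `0`, of a bump function equal to
`1` on `[-a, a]` and supported in `[-r, r]`. -/
lemma exists_smooth_truncation {a r : ℝ} (ha : 0 < a) (har : a < r) :
    ∃ φ : ℝ → ℝ, ContDiff ℝ (⊤ : ℕ∞) φ ∧ (∀ z, 0 ≤ deriv φ z ∧ deriv φ z ≤ 1) ∧
      (∀ z ∈ Icc (-a) a, φ z = z) ∧ (∀ z, |φ z| ≤ r) ∧ (∀ z, 0 ≤ z * φ z) := by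
  let p : ContDiffBump (0 : ℝ) := ⟨a, r, ha, har⟩
  have hpc : Continuous p := p.continuous
  have hint : ∀ u v : ℝ, IntervalIntegrable p MeasureTheory.volume u v :=
    fun u v => hpc.intervalIntegrable u v
  have hder : ∀ z : ℝ, HasDerivAt (fun z => ∫ x in (0 : ℝ)..z, p x) (p z) z := fun z =>
    intervalIntegral.integral_hasDerivAt_right (hint _ _)
      (hpc.stronglyMeasurableAtFilter _ _) hpc.continuousAt
  have hderiv : deriv (fun z => ∫ x in (0 : ℝ)..z, p x) = p := funext fun z => (hder z).deriv
  have hodd : ∀ z : ℝ, (∫ x in (0 : ℝ)..(-z), p x) = - ∫ x in (0 : ℝ)..z, p x := by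
    intro z
    have h := intervalIntegral.integral_comp_neg (a := 0) (b := z) (fun x => p x)
    simp only [p.neg, neg_zero] at h
    rw [h, intervalIntegral.integral_symm]
  have hnn : ∀ z : ℝ, 0 ≤ z → 0 ≤ ∫ x in (0 : ℝ)..z, p x := fun z hz =>
    intervalIntegral.integral_nonneg hz fun x _ => p.nonneg
  have hle : ∀ z : ℝ, 0 ≤ z → (∫ x in (0 : ℝ)..z, p x) ≤ z := by
    intro z hz
    have := intervalIntegral.integral_mono (g := fun _ => (1 : ℝ)) hz (hint 0 z)
      (by simp) (fun x => p.le_one)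
    simpa using this
  have hler : ∀ z : ℝ, 0 ≤ z → (∫ x in (0 : ℝ)..z, p x) ≤ r := by
    intro z hz
    rcases le_total z r with h | h
    · exact (hle z hz).trans h
    · have h0 : (∫ x in r..z, p x) = 0 := by
        rw [intervalIntegral.integral_congr (g := fun _ => (0 : ℝ))]
        · simp
        · intro x hx
          rw [uIcc_of_le h] at hx
          apply p.zero_of_le_dist
          rw [Real.dist_eq, sub_zero]
          exact hx.1.trans (le_abs_self x)
      rw [← intervalIntegral.integral_add_adjacent_intervals (hint 0 r) (hint r z), h0, add_zero]
      exact hle r (ha.trans har).le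
  refine ⟨fun z => ∫ x in (0 : ℝ)..z, p x, ?_, ?_, ?_, ?_, ?_⟩
  · rw [contDiff_infty_iff_deriv, hderiv]
    exact ⟨fun z => (hder z).differentiableAt, p.contDiff⟩
  · intro z
    rw [hderiv]
    exact ⟨p.nonneg, p.le_one⟩
  · intro z hz
    have : (∫ x in (0 : ℝ)..z, p x) = ∫ x in (0 : ℝ)..z, (1 : ℝ) := by
      apply intervalIntegral.integral_congr
      intro x hx
      apply p.one_of_mem_closedBall
      have h0 : (0 : ℝ) ∈ Icc (-a) a := ⟨by linarith, ha.le⟩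
      have := (uIcc_subset_Icc h0 hz) hx
      rw [Metric.mem_closedBall, Real.dist_eq, sub_zero]
      exact abs_le.2 this
    simpa using this
  · intro z
    rcases le_total 0 z with h | h
    · rw [abs_of_nonneg (hnn z h)]
      exact hler z h
    · have h' : 0 ≤ -z := by linarith
      rw [← abs_neg, ← hodd, abs_of_nonneg (hnn _ h')]
      exact hler _ h'
  · intro z
    rcases le_total 0 z with h | h
    · exact mul_nonneg h (hnn z h)
    · have h' : 0 ≤ -z := by linarith
      have := mul_nonneg h' (hnn _ h')
      rw [hodd] at this
      simpa using this

/-- A smooth cutoff nonincreasing in `|z|`, namely `z ↦ T (2 - 4 z ^ 2)` with `T` the monotone smooth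
transition from `0` to `1`. The condition `z * deriv ψ z ≤ 0` says that `ψ'` has the sign opposite to
that of `z`. -/
lemma exists_smooth_cutoff :
    ∃ ψ : ℝ → ℝ, ContDiff ℝ (⊤ : ℕ∞) ψ ∧ (∀ z, 0 ≤ ψ z ∧ ψ z ≤ 1) ∧
      (∀ z, |z| ≤ 1 / 2 → ψ z = 1) ∧ (∀ z, 3 / 4 ≤ |z| → ψ z = 0) ∧
      (∀ z, z * deriv ψ z ≤ 0) ∧
      ∃ C, 0 < C ∧ ∀ z ∈ Icc (-1 : ℝ) 1, |deriv ψ z| ≤ C := by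
  let T := Real.smoothTransition
  have hT : ContDiff ℝ (⊤ : ℕ∞) T := Real.smoothTransition.contDiff
  have hψ : ContDiff ℝ (⊤ : ℕ∞) (fun z : ℝ => T (2 - 4 * z ^ 2)) :=
    hT.comp (by fun_prop)
  refine ⟨fun z => T (2 - 4 * z ^ 2), hψ, ?_, ?_, ?_, ?_, ?_⟩
  · exact fun z => ⟨Real.smoothTransition.nonneg _, Real.smoothTransition.le_one _⟩
  · intro z hz
    apply Real.smoothTransition.one_of_one_le
    rw [← sq_abs]
    nlinarith [abs_nonneg z]
  · intro z hz
    apply Real.smoothTransition.zero_of_nonpos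
    rw [← sq_abs]
    nlinarith
  · intro z
    have h1 : HasDerivAt (fun z : ℝ => 2 - 4 * z ^ 2) (-(8 * z)) z := by
      have := ((hasDerivAt_pow 2 z).const_mul 4).const_sub 2
      have he : -(8 * z) = -(4 * (((2 : ℕ) : ℝ) * z ^ (2 - 1))) := by
        norm_num
        ring
      rw [he]
      exact this
    have h2 : HasDerivAt T (deriv T (2 - 4 * z ^ 2)) (2 - 4 * z ^ 2) :=
      (hT.differentiable (by simp) _).hasDerivAt
    have h3 := h2.comp z h1
    have h4 : deriv (fun z : ℝ => T (2 - 4 * z ^ 2)) z = deriv T (2 - 4 * z ^ 2) * (-(8 * z)) :=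
      h3.deriv
    have h5 : 0 ≤ deriv T (2 - 4 * z ^ 2) := Real.smoothTransition.monotone.deriv_nonneg
    rw [h4]
    nlinarith [mul_nonneg h5 (sq_nonneg z)]
  · have hc : Continuous (deriv fun z : ℝ => T (2 - 4 * z ^ 2)) :=
      hψ.continuous_deriv (by simp)
    obtain ⟨C, hC⟩ := isCompact_Icc.exists_bound_of_continuousOn (s := Icc (-1 : ℝ) 1)
      hc.continuousOn
    exact ⟨max C 1, by positivity, fun z hz => (hC z hz).trans (le_max_left _ _)⟩


/-- For every `K > 1` and `δ ∈ (0,1)` there is `α₀ ∈ (0,1)` such that for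
every `α ∈ (0, α₀)` there is a `C^∞` function `χ : ℝ → ℝ` with:
(i) `χ z = K z` on `[-α, α]`;
(ii) `1 - δ ≤ χ' z ≤ K` on `[-1, 1]`;
(iii) `χ z = z` whenever `|z| ≥ 1 - κ` for some `κ ∈ (0,1)` — in particular `χ` restricts
to an increasing diffeomorphism of `[-1, 1]` onto itself;
(iv) `|χ z - z| ≤ α K` on `[-1, 1]`. -/
theorem exists_smooth_expansion_bump
    (K : ℝ) (hK : 1 < K) (δ : ℝ) (hδ : δ ∈ Set.Ioo (0 : ℝ) 1) :
    ∃ α₀ ∈ Set.Ioo (0 : ℝ) 1, ∀ α ∈ Set.Ioo (0 : ℝ) α₀,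
      ∃ χ : ℝ → ℝ, ContDiff ℝ (⊤ : ℕ∞) χ ∧
        (∀ z ∈ Set.Icc (-α) α, χ z = K * z) ∧
        (∀ z ∈ Set.Icc (-1 : ℝ) 1, 1 - δ ≤ deriv χ z ∧ deriv χ z ≤ K) ∧
        (∃ κ ∈ Set.Ioo (0 : ℝ) 1, ∀ z : ℝ, 1 - κ ≤ |z| → χ z = z) ∧
        Set.BijOn χ (Set.Icc (-1 : ℝ) 1) (Set.Icc (-1 : ℝ) 1) ∧
        (∀ z ∈ Set.Icc (-1 : ℝ) 1, 0 < deriv χ z) ∧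
        (∀ z ∈ Set.Icc (-1 : ℝ) 1, |χ z - z| ≤ α * K) := by
  obtain ⟨ψ, hψ, hψ01, hψ1, hψ0, hψs, C, hC, hψC⟩ := exists_smooth_cutoff
  obtain ⟨hδ0, hδ1⟩ := hδ
  have hK0 : 0 < K := by linarith
  have hK1 : 0 < K - 1 := by linarith
  -- `α ≤ 1 / 2` keeps `[-α, α]` where `ψ = 1`; `α * K * C ≤ δ` gives the lower bound on `χ'`.
  refine ⟨min (1 / 2) (δ / (K * C)), ⟨by positivity, (min_le_left _ _).trans_lt (by norm_num)⟩, ?_⟩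
  rintro α ⟨hα, hα'⟩
  have hα2 : α ≤ 1 / 2 := (hα'.trans_le (min_le_left _ _)).le
  have hαC : α * (K * C) ≤ δ :=
    (le_div_iff₀ (by positivity)).1 (hα'.trans_le (min_le_right _ _)).le
  obtain ⟨r, hr⟩ : ∃ r, r = α * K / (K - 1) := ⟨_, rfl⟩
  have hr' : (K - 1) * r = α * K := by rw [hr]; field_simp
  have har : α < r := by
    rw [hr, lt_div_iff₀ hK1]
    linarith
  obtain ⟨φ, hφ, hφ01, hφid, hφr, hφs⟩ := exists_smooth_truncation hα har
  have hsm : ContDiff ℝ (⊤ : ℕ∞) (fun z => z + (K - 1) * (φ z * ψ z)) :=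
    contDiff_id.add (contDiff_const.mul (hφ.mul hψ))
  have hder : ∀ z, deriv (fun z => z + (K - 1) * (φ z * ψ z)) z =
      1 + (K - 1) * (deriv φ z * ψ z + φ z * deriv ψ z) := fun z =>
    ((hasDerivAt_id z).add (((hφ.differentiable (by simp) z).hasDerivAt.mul
      (hψ.differentiable (by simp) z).hasDerivAt).const_mul (K - 1))).deriv
  have hneg : ∀ z, φ z * deriv ψ z ≤ 0 := by
    intro z
    rcases eq_or_ne z 0 with rfl | hz
    · rw [hφid 0 ⟨by linarith, hα.le⟩, zero_mul]
    · have h := mul_nonpos_of_nonneg_of_nonpos (hφs z) (hψs z)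
      have hz2 : 0 < z ^ 2 := by positivity
      nlinarith
  have hbd : ∀ z ∈ Icc (-1 : ℝ) 1, 1 - δ ≤ deriv (fun z => z + (K - 1) * (φ z * ψ z)) z ∧
      deriv (fun z => z + (K - 1) * (φ z * ψ z)) z ≤ K := by
    intro z hz
    rw [hder]
    have h1 : 0 ≤ deriv φ z * ψ z := mul_nonneg (hφ01 z).1 (hψ01 z).1
    have h2 : deriv φ z * ψ z ≤ 1 := mul_le_one₀ (hφ01 z).2 (hψ01 z).1 (hψ01 z).2
    have h3 : |φ z * deriv ψ z| ≤ r * C := by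
      rw [abs_mul]
      exact mul_le_mul (hφr z) (hψC z hz) (abs_nonneg _) (hα.trans har).le
    have h4 := (abs_le.1 h3).1
    have h5 : (K - 1) * (r * C) ≤ δ := by
      rw [← mul_assoc, hr', mul_assoc]
      exact hαC
    constructor
    · nlinarith
    · nlinarith [hneg z]
  have hpos : ∀ z ∈ Icc (-1 : ℝ) 1, 0 < deriv (fun z => z + (K - 1) * (φ z * ψ z)) z :=
    fun z hz => by linarith [(hbd z hz).1]
  have hid : ∀ z : ℝ, 3 / 4 ≤ |z| → z + (K - 1) * (φ z * ψ z) = z := by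
    intro z hz
    rw [hψ0 z hz]
    ring
  have hmono : StrictMonoOn (fun z => z + (K - 1) * (φ z * ψ z)) (Icc (-1 : ℝ) 1) :=
    strictMonoOn_of_deriv_pos (convex_Icc _ _) hsm.continuous.continuousOn
      fun z hz => hpos z (interior_subset hz)
  have e1 := hid 1 (by norm_num)
  have e2 := hid (-1) (by norm_num)
  refine ⟨fun z => z + (K - 1) * (φ z * ψ z), hsm, ?_, hbd, ⟨1 / 4, by norm_num, ?_⟩,
    ⟨?_, hmono.injOn, ?_⟩, hpos, ?_⟩
  · intro z hz
    have : |z| ≤ 1 / 2 := (abs_le.2 hz).trans hα2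
    simp only [hφid z hz, hψ1 z this]
    ring
  · exact fun z hz => hid z (by linarith)
  · intro z hz
    have hl := hmono.monotoneOn (left_mem_Icc.2 (by norm_num)) hz hz.1
    have hu := hmono.monotoneOn hz (right_mem_Icc.2 (by norm_num)) hz.2
    simp only [e1, e2] at hl hu
    exact ⟨hl, hu⟩
  · have h := intermediate_value_Icc (by norm_num : (-1 : ℝ) ≤ 1)
      (hsm.continuous.continuousOn (s := Icc (-1 : ℝ) 1))
    simp only [e1, e2] at h
    exact h
  · intro z _
    have h : |φ z * ψ z| ≤ r := by
      rw [abs_mul, abs_of_nonneg (hψ01 z).1]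
      exact (mul_le_of_le_one_right (abs_nonneg _) (hψ01 z).2).trans (hφr z)
    rw [add_sub_cancel_left, abs_mul, abs_of_pos hK1, ← hr']
    exact mul_le_mul_of_nonneg_left h hK1.le
end

section
/- There exists an area-preserving modification family {Γ_t}_{t ∈ [0,1]} of ℝ² such that ‖Γ_t(x, y)‖ = ‖(x, y)‖ for every t ∈ [0, 1] and every (x, y) ∈ ℝ² (each Γ_t preserves the Euclidean distance to the origin), and such that Γ₁ coincides with the rotation of angle π/2 about the origin on a neighborhood of the origin; in particular the differential DΓ₁(0, 0) is the rotation matrix of angle π/2. -/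
/-!
The family is a twist of the plane. For a smooth profile `θ : ℝ → ℝ`, the map `twist θ` rotates
each circle `x² + y² = s` by the angle `θ s`. It preserves the distance to the origin, so its
inverse is `twist (-θ)`; in polar coordinates it is the shear `(r, φ) ↦ (r, φ + θ (r²))`, so its
Jacobian determinant is `1` (`det_fderiv_twist`). Taking `θ_t = t · (π/2) · χ` with `χ` a smooth
cutoff equal to `1` on `s ≤ 1/2` and to `0` on `s ≥ 1` gives the identity outside the unit disc and
at `t = 0`, and the rotation of angle `π/2` near the origin at `t = 1`.
-/

/-- The map rotating each circle `x² + y² = s` about the origin by the angle `θ s`. The profile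
is a function of the squared radius, so that smoothness at the origin is automatic. -/
noncomputable def twist (θ : ℝ → ℝ) (p : ℝ × ℝ) : ℝ × ℝ :=
  (Real.cos (θ (p.1 ^ 2 + p.2 ^ 2)) * p.1 - Real.sin (θ (p.1 ^ 2 + p.2 ^ 2)) * p.2,
   Real.sin (θ (p.1 ^ 2 + p.2 ^ 2)) * p.1 + Real.cos (θ (p.1 ^ 2 + p.2 ^ 2)) * p.2)

/-- The angle profile at time `t`, as a function of the squared radius `s`: it equals `t · π/2` for
`s ≤ 1/2` and `0` for `s ≥ 1`. -/
noncomputable def twistAngle (t s : ℝ) : ℝ :=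
  t * (Real.pi / 2) * Real.smoothTransition (2 - 2 * s)

lemma twist_normSq (θ : ℝ → ℝ) (p : ℝ × ℝ) :
    (twist θ p).1 ^ 2 + (twist θ p).2 ^ 2 = p.1 ^ 2 + p.2 ^ 2 := by
  have h := Real.sin_sq_add_cos_sq (θ (p.1 ^ 2 + p.2 ^ 2))
  simp only [twist]
  linear_combination (p.1 ^ 2 + p.2 ^ 2) * h

lemma twist_neg_twist (θ : ℝ → ℝ) (p : ℝ × ℝ) :
    twist (fun s => -θ s) (twist θ p) = p := by
  have h := Real.sin_sq_add_cos_sq (θ (p.1 ^ 2 + p.2 ^ 2))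
  rw [twist, twist_normSq]
  simp only [twist, Real.cos_neg, Real.sin_neg]
  ext
  · linear_combination p.1 * h
  · linear_combination p.2 * h

lemma twist_of_angle_eq_zero {θ : ℝ → ℝ} {p : ℝ × ℝ} (h : θ (p.1 ^ 2 + p.2 ^ 2) = 0) :
    twist θ p = p := by
  simp [twist, h]

lemma contDiff_twist {θ : ℝ → ℝ} (hθ : ContDiff ℝ (⊤ : ℕ∞) θ) :
    ContDiff ℝ (⊤ : ℕ∞) (twist θ) := by
  unfold twist
  fun_prop

lemma contDiff_uncurry_twistAngle :
    ContDiff ℝ (⊤ : ℕ∞) (fun q : ℝ × ℝ => twistAngle q.1 q.2) := by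
  have h : ContDiff ℝ (⊤ : ℕ∞) Real.smoothTransition := Real.smoothTransition.contDiff
  unfold twistAngle
  fun_prop

lemma contDiff_twistAngle (t : ℝ) : ContDiff ℝ (⊤ : ℕ∞) (twistAngle t) :=
  contDiff_uncurry_twistAngle.comp (contDiff_prodMk_right t)

lemma contDiff_twist_twistAngle :
    ContDiff ℝ (⊤ : ℕ∞) (fun p : ℝ × (ℝ × ℝ) => twist (twistAngle p.1) p.2) := by
  have h : ContDiff ℝ (⊤ : ℕ∞)
      (fun p : ℝ × (ℝ × ℝ) => twistAngle p.1 (p.2.1 ^ 2 + p.2.2 ^ 2)) :=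
    contDiff_uncurry_twistAngle.comp
      (f := fun p : ℝ × (ℝ × ℝ) => (p.1, p.2.1 ^ 2 + p.2.2 ^ 2)) (by fun_prop)
  unfold twist
  fun_prop

lemma det_clm_prod (A : ℝ × ℝ →L[ℝ] ℝ × ℝ) :
    A.det = (A (1, 0)).1 * (A (0, 1)).2 - (A (0, 1)).1 * (A (1, 0)).2 := by
  rw [ContinuousLinearMap.det, ← LinearMap.det_toMatrix (Module.Basis.finTwoProd ℝ),
    Matrix.det_fin_two]
  simp [LinearMap.toMatrix_apply]

/-- A twist is area preserving: the radial derivative of the angle contributes a displacement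
tangent to the circle, and its contributions to the determinant cancel, leaving
`cos² + sin² = 1`. -/
lemma det_fderiv_twist {θ : ℝ → ℝ} (hθ : Differentiable ℝ θ) (p : ℝ × ℝ) :
    (fderiv ℝ (twist θ) p).det = 1 := by
  have h1 : HasFDerivAt (fun q : ℝ × ℝ => q.1) (ContinuousLinearMap.fst ℝ ℝ ℝ) p := hasFDerivAt_fst
  have h2 : HasFDerivAt (fun q : ℝ × ℝ => q.2) (ContinuousLinearMap.snd ℝ ℝ ℝ) p := hasFDerivAt_snd
  have hs := (h1.pow 2).add (h2.pow 2)
  have ha := (hθ (p.1 ^ 2 + p.2 ^ 2)).hasDerivAt.comp_hasFDerivAt p hs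
  have hT := ((ha.cos.mul h1).sub (ha.sin.mul h2)).prodMk ((ha.sin.mul h1).add (ha.cos.mul h2))
  have hT' : HasFDerivAt (twist θ) _ p := hT
  rw [hT'.fderiv, det_clm_prod]
  simp
  linear_combination Real.sin_sq_add_cos_sq (θ (p.1 ^ 2 + p.2 ^ 2))

lemma twist_twistAngle_one_eq {p : ℝ × ℝ} (h : p.1 ^ 2 + p.2 ^ 2 < (1 / 2) ^ 2) :
    twist (twistAngle 1) p = (-p.2, p.1) := by
  have h1 : Real.smoothTransition (2 - 2 * (p.1 ^ 2 + p.2 ^ 2)) = 1 :=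
    Real.smoothTransition.one_of_one_le (by linarith)
  simp [twist, twistAngle, h1]


/-- A *modification family* of `ℝ²`: a jointly `C^∞` family `Γ_t` (`t ∈ [0,1]`) of `C^∞`
diffeomorphisms of `ℝ²`, each equal to the identity outside the closed unit disc,
with `Γ₀ = id` and `Γ_t (0,0) = (0,0)` for every `t ∈ [0,1]`. -/
structure ModificationFamily where
  Γ : ℝ → ℝ × ℝ → ℝ × ℝ
  Γinv : ℝ → ℝ × ℝ → ℝ × ℝ
  smooth_joint : ContDiffOn ℝ (⊤ : ℕ∞) (fun p : ℝ × (ℝ × ℝ) => Γ p.1 p.2)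
      (Set.Icc (0 : ℝ) 1 ×ˢ Set.univ)
  smooth_slice : ∀ t ∈ Set.Icc (0 : ℝ) 1, ContDiff ℝ (⊤ : ℕ∞) (Γ t)
  smooth_inv : ∀ t ∈ Set.Icc (0 : ℝ) 1, ContDiff ℝ (⊤ : ℕ∞) (Γinv t)
  left_inv : ∀ t ∈ Set.Icc (0 : ℝ) 1, Function.LeftInverse (Γinv t) (Γ t)
  right_inv : ∀ t ∈ Set.Icc (0 : ℝ) 1, Function.RightInverse (Γinv t) (Γ t)
  id_outside : ∀ t ∈ Set.Icc (0 : ℝ) 1, ∀ p : ℝ × ℝ, 1 < p.1 ^ 2 + p.2 ^ 2 → Γ t p = p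
  zero_eq_id : ∀ p : ℝ × ℝ, Γ 0 p = p
  fixes_origin : ∀ t ∈ Set.Icc (0 : ℝ) 1, Γ t (0, 0) = (0, 0)

/-- A modification family is *area preserving* if each `Γ_t` has Jacobian determinant `1`
everywhere. -/
def ModificationFamily.AreaPreserving (Γ : ModificationFamily) : Prop :=
  ∀ t ∈ Set.Icc (0 : ℝ) 1, ∀ p : ℝ × ℝ, (fderiv ℝ (Γ.Γ t) p).det = 1

/-- There exists an area-preserving modification family `{Γ_t}` of `ℝ²`
such that `‖Γ_t (x, y)‖ = ‖(x, y)‖` for all `t ∈ [0,1]` and all `(x,y)` (each `Γ_t`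
preserves the Euclidean distance to the origin), and `Γ₁` coincides with the rotation
of angle `π/2` about the origin on a neighborhood of the origin; in particular
`DΓ₁(0,0)` is the rotation of angle `π/2`. -/
theorem exists_rotation_modification_family :
    ∃ Γ : ModificationFamily, Γ.AreaPreserving ∧
      (∀ t ∈ Set.Icc (0 : ℝ) 1, ∀ p : ℝ × ℝ,
        (Γ.Γ t p).1 ^ 2 + (Γ.Γ t p).2 ^ 2 = p.1 ^ 2 + p.2 ^ 2) ∧
      (∃ r : ℝ, 0 < r ∧ ∀ p : ℝ × ℝ, p.1 ^ 2 + p.2 ^ 2 < r ^ 2 →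
        Γ.Γ 1 p = (-p.2, p.1)) ∧
      (∀ v : ℝ × ℝ, fderiv ℝ (Γ.Γ 1) (0, 0) v = (-v.2, v.1)) := by
  refine ⟨
    { Γ := fun t => twist (twistAngle t)
      Γinv := fun t => twist (fun s => -twistAngle t s)
      smooth_joint := contDiff_twist_twistAngle.contDiffOn
      smooth_slice := fun t _ => contDiff_twist (contDiff_twistAngle t)
      smooth_inv := fun t _ => contDiff_twist (contDiff_twistAngle t).neg
      left_inv := fun t _ p => twist_neg_twist _ p
      right_inv := fun t _ p => by
        simpa using twist_neg_twist (fun s => -twistAngle t s) p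
      id_outside := fun t _ p hp => twist_of_angle_eq_zero (by
        simp [twistAngle, Real.smoothTransition.zero_of_nonpos
          (show 2 - 2 * (p.1 ^ 2 + p.2 ^ 2) ≤ 0 by linarith)])
      zero_eq_id := fun p => twist_of_angle_eq_zero (by simp [twistAngle])
      fixes_origin := fun t _ => by simp [twist] },
    fun t _ p => det_fderiv_twist ((contDiff_twistAngle t).differentiable (by simp)) p,
    fun t _ p => twist_normSq _ p,
    ⟨1 / 2, by norm_num, fun p hp => twist_twistAngle_one_eq hp⟩, fun v => ?_⟩
  have hev : twist (twistAngle 1) =ᶠ[nhds ((0, 0) : ℝ × ℝ)] fun p => (-p.2, p.1) := by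
    have hc : Continuous fun p : ℝ × ℝ => p.1 ^ 2 + p.2 ^ 2 := by fun_prop
    filter_upwards [hc.continuousAt.eventually_lt continuousAt_const
      (show ((0, 0) : ℝ × ℝ).1 ^ 2 + ((0, 0) : ℝ × ℝ).2 ^ 2 < (1 / 2 : ℝ) ^ 2 by norm_num)]
      with p hp using twist_twistAngle_one_eq hp
  have hd : HasFDerivAt (fun p : ℝ × ℝ => (-p.2, p.1))
      ((-ContinuousLinearMap.snd ℝ ℝ ℝ).prod (ContinuousLinearMap.fst ℝ ℝ ℝ)) ((0, 0) : ℝ × ℝ) :=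
    ((-ContinuousLinearMap.snd ℝ ℝ ℝ).prod (ContinuousLinearMap.fst ℝ ℝ ℝ)).hasFDerivAt
  change fderiv ℝ (twist (twistAngle 1)) (0, 0) v = _
  rw [hev.fderiv_eq, hd.fderiv]
  simp
end

section
/- Let C₁, C₂ be cones in ℝ³, each strictly containing the z-direction and transverse to the xy-plane, with C₁ strictly contained in C₂. Then for every M > 0 there exists K₀ > 1 such that for every K ≥ K₀, every linear map A : ℝ² → ℝ² with operator norm ‖A‖ ≤ M, and every vector B ∈ ℝ² with ‖B‖ ≤ M, the linear map T : ℝ³ → ℝ³ defined by T(v, w) = (A v + w B, K w) for v ∈ ℝ², w ∈ ℝ, satisfies: (i) T(C₁ ∖ {0}) ⊆ int(C₂) (T maps C₁ strictly into C₂); and (ii) ‖T(u)‖ > 1 for every unit vector u ∈ C₂ (in particular T expands all unit vectors of C₂ beyond norm 1). -/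
/-! A cone `C` is closed and invariant under scaling. Transversality to the `xy`-plane and
compactness of the unit sphere give `c` with `‖p‖ ≤ c |w|` (sup norm) for every
`p = (v, w) ∈ C` (`TransverseToXY.exists_norm_le`). As the interior of `C` contains `(0, 0, 1)`,
it contains, by scaling, every `(v, w)` with `w ≠ 0` and sup norm `‖v‖ < ε |w|`, for some `ε > 0`
(`ContainsZDirection.exists_mem_interior`).

Apply both facts to `C₂ ⊇ C₁`. For `p = (v, w) ∈ C₂`, `p ≠ 0`, the `xy`-coordinates of `T p` are at
most `(2c + 1) M |w|`, and its `z`-component is `K w` with `w ≠ 0`, so `T p ∈ int C₂` once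
`(2c + 1) M < ε K`. A Euclidean-unit `u ∈ C₂` satisfies `1 ≤ 3 c² w²`, so
`‖T u‖² ≥ K² w² > 1` once `K > 2c`. -/

/-! Points of `ℝ³` are written `p : ℝ × ℝ × ℝ`, `p = (v, w)` with `v = (p.1, p.2.1) ∈ ℝ²`
the `xy`-component and `w = p.2.2 ∈ ℝ` the `z`-component. -/

/-- The standard cone `{(x,y,z) : |z| ≥ √(x² + y²)}` of `ℝ³`. -/
def stdCone : Set (ℝ × ℝ × ℝ) := {p | p.1 ^ 2 + p.2.1 ^ 2 ≤ p.2.2 ^ 2}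

/-- A *cone* of `ℝ³` is the image of the standard cone by a linear automorphism. -/
def IsCone (C : Set (ℝ × ℝ × ℝ)) : Prop :=
  ∃ L : (ℝ × ℝ × ℝ) ≃ₗ[ℝ] ℝ × ℝ × ℝ, C = L '' stdCone

/-- `C₁` is *strictly contained* in `C₂`: `C₁ ⊆ int C₂ ∪ {0}`. -/
def StrictlyContained (C₁ C₂ : Set (ℝ × ℝ × ℝ)) : Prop :=
  C₁ ⊆ interior C₂ ∪ {(0 : ℝ × ℝ × ℝ)}

/-- `C` strictly contains the `z`-direction: the `z`-axis lies in `int C ∪ {0}`. -/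
def ContainsZDirection (C : Set (ℝ × ℝ × ℝ)) : Prop :=
  {p : ℝ × ℝ × ℝ | p.1 = 0 ∧ p.2.1 = 0} ⊆ interior C ∪ {(0 : ℝ × ℝ × ℝ)}

/-- `C` is transverse to the `xy`-plane: `C ∩ (ℝ² × {0}) = {0}`. -/
def TransverseToXY (C : Set (ℝ × ℝ × ℝ)) : Prop :=
  C ∩ {p : ℝ × ℝ × ℝ | p.2.2 = 0} = {(0 : ℝ × ℝ × ℝ)}

/-- The Euclidean norm on `ℝ²`. -/
noncomputable def eNorm2 (v : ℝ × ℝ) : ℝ := Real.sqrt (v.1 ^ 2 + v.2 ^ 2)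

/-- The Euclidean norm on `ℝ³`. -/
noncomputable def eNorm3 (p : ℝ × ℝ × ℝ) : ℝ :=
  Real.sqrt (p.1 ^ 2 + p.2.1 ^ 2 + p.2.2 ^ 2)

/-- The linear map `T(v, w) = (A v + w B, K w)` on `ℝ³ = ℝ² × ℝ`. -/
def shearMap (A : (ℝ × ℝ) →ₗ[ℝ] ℝ × ℝ) (B : ℝ × ℝ) (K : ℝ) (p : ℝ × ℝ × ℝ) : ℝ × ℝ × ℝ :=
  ((A (p.1, p.2.1)).1 + p.2.2 * B.1, (A (p.1, p.2.1)).2 + p.2.2 * B.2, K * p.2.2)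

lemma IsCone.isClosed {C : Set (ℝ × ℝ × ℝ)} (hC : IsCone C) : IsClosed C := by
  obtain ⟨L, rfl⟩ := hC
  have h : IsClosed stdCone :=
    isClosed_le (f := fun p : ℝ × ℝ × ℝ => p.1 ^ 2 + p.2.1 ^ 2) (g := fun p => p.2.2 ^ 2)
      (by fun_prop) (by fun_prop)
  exact L.toContinuousLinearEquiv.toHomeomorph.isClosedMap _ h

lemma IsCone.smul_mem {C : Set (ℝ × ℝ × ℝ)} (hC : IsCone C) (t : ℝ) {p : ℝ × ℝ × ℝ}
    (hp : p ∈ C) : t • p ∈ C := by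
  obtain ⟨L, rfl⟩ := hC
  obtain ⟨q, hq, rfl⟩ := hp
  refine ⟨t • q, ?_, by simp⟩
  simp only [stdCone, Set.mem_ofPred_eq, Prod.smul_fst, Prod.smul_snd, smul_eq_mul] at hq ⊢
  nlinarith [mul_le_mul_of_nonneg_left hq (sq_nonneg t)]

/-- On a transverse cone the (sup) norm is controlled by the height, uniformly. -/
lemma TransverseToXY.exists_norm_le {C : Set (ℝ × ℝ × ℝ)} (htr : TransverseToXY C)
    (hC : IsCone C) : ∃ c : ℝ, 1 ≤ c ∧ ∀ p ∈ C, ‖p‖ ≤ c * |p.2.2| := by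
  have hcomp : IsCompact (C ∩ Metric.sphere (0 : ℝ × ℝ × ℝ) 1) :=
    (isCompact_sphere _ _).inter_left hC.isClosed
  have hne : ∀ p ∈ C ∩ Metric.sphere (0 : ℝ × ℝ × ℝ) 1, p.2.2 ≠ 0 := by
    rintro p ⟨hp, hs⟩ h0
    have : p ∈ ({0} : Set (ℝ × ℝ × ℝ)) := htr ▸ ⟨hp, h0⟩
    rw [Set.mem_singleton_iff] at this
    simp [this] at hs
  have hcont : ContinuousOn (fun p : ℝ × ℝ × ℝ => |p.2.2|⁻¹)
      (C ∩ Metric.sphere (0 : ℝ × ℝ × ℝ) 1) :=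
    ContinuousOn.inv₀ (by fun_prop) fun p hp => abs_ne_zero.2 (hne p hp)
  obtain ⟨c, hc⟩ := hcomp.bddAbove_image hcont
  refine ⟨max c 1, le_max_right _ _, fun p hp => ?_⟩
  rcases eq_or_ne p 0 with rfl | hp0
  · simp
  have hn : 0 < ‖p‖ := norm_pos_iff.2 hp0
  have hmem : ‖p‖⁻¹ • p ∈ C ∩ Metric.sphere (0 : ℝ × ℝ × ℝ) 1 :=
    ⟨hC.smul_mem _ hp, by simp [norm_smul, hn.ne']⟩
  have hw : 0 < |p.2.2| := by
    have := hne _ hmem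
    simp only [Prod.smul_snd, smul_eq_mul] at this
    exact abs_pos.2 (right_ne_zero_of_mul this)
  have h := hc ⟨_, hmem, rfl⟩
  simp only [Prod.smul_snd, smul_eq_mul, abs_mul, abs_inv, abs_norm, mul_inv, inv_inv] at h
  rw [← div_eq_mul_inv, div_le_iff₀ hw] at h
  exact h.trans (mul_le_mul_of_nonneg_right (le_max_left _ _) hw.le)

/-- The interior of a cone around the `z`-direction contains an open square-based cone around it. -/
lemma ContainsZDirection.exists_mem_interior {C : Set (ℝ × ℝ × ℝ)} (hz : ContainsZDirection C)
    (hC : IsCone C) : ∃ ε : ℝ, 0 < ε ∧ ∀ p : ℝ × ℝ × ℝ, p.2.2 ≠ 0 → |p.1| < ε * |p.2.2| →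
      |p.2.1| < ε * |p.2.2| → p ∈ interior C := by
  have h1 : ((0, 0, 1) : ℝ × ℝ × ℝ) ∈ interior C := by
    rcases hz (show ((0, 0, 1) : ℝ × ℝ × ℝ) ∈ _ from ⟨rfl, rfl⟩) with h | h
    · exact h
    · simp at h
  obtain ⟨ε, hε, hball⟩ := Metric.isOpen_iff.1 isOpen_interior _ h1
  refine ⟨ε, hε, fun p hw hx hy => ?_⟩
  have hw' : 0 < |p.2.2| := abs_pos.2 hw
  have hmem : p.2.2⁻¹ • p ∈ interior C := by
    apply hball
    rw [mem_ball_iff_norm, Prod.norm_def, Prod.norm_def]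
    simp only [Prod.fst_sub, Prod.snd_sub, Prod.smul_fst, Prod.smul_snd, smul_eq_mul,
      inv_mul_cancel₀ hw, sub_self, sub_zero, norm_zero, Real.norm_eq_abs, abs_mul, abs_inv,
      max_lt_iff]
    rw [inv_mul_lt_iff₀ hw', inv_mul_lt_iff₀ hw', mul_comm _ ε]
    exact ⟨hx, hy, hε⟩
  have hsub : (fun q : ℝ × ℝ × ℝ => p.2.2⁻¹ • q) ⁻¹' C ⊆ C := fun q hq => by
    simpa [smul_smul, mul_inv_cancel₀ hw] using hC.smul_mem p.2.2 hq
  exact interior_mono hsub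
    (preimage_interior_subset_interior_preimage (continuous_const_smul p.2.2⁻¹) hmem)

lemma abs_le_eNorm2 (v : ℝ × ℝ) : |v.1| ≤ eNorm2 v ∧ |v.2| ≤ eNorm2 v :=
  ⟨Real.abs_le_sqrt (by nlinarith [sq_nonneg v.2]), Real.abs_le_sqrt (by nlinarith [sq_nonneg v.1])⟩

lemma eNorm2_le {v : ℝ × ℝ} {r : ℝ} (h1 : |v.1| ≤ r) (h2 : |v.2| ≤ r) : eNorm2 v ≤ 2 * r := by
  have hr : 0 ≤ r := (abs_nonneg _).trans h1
  refine Real.sqrt_le_iff.2 ⟨by positivity, ?_⟩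
  nlinarith [sq_le_sq' (abs_le.1 h1).1 (abs_le.1 h1).2, sq_le_sq' (abs_le.1 h2).1 (abs_le.1 h2).2]

/-- Let `C₁, C₂` be cones of `ℝ³`, strictly containing the
`z`-direction, transverse to the `xy`-plane, with `C₁` strictly contained in `C₂`.
Then for every `M > 0` there is `K₀ > 1` such that for every `K ≥ K₀`, every linear map
`A : ℝ² → ℝ²` with (Euclidean) operator norm at most `M` and every `B ∈ ℝ²` with
`‖B‖ ≤ M`, the linear map `T(v, w) = (A v + w B, K w)` satisfies:
(i) `T` maps `C₁ ∖ {0}` into `int C₂`, and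
(ii) `‖T u‖ > 1` for every Euclidean-unit vector `u ∈ C₂`. -/
theorem shear_maps_cone_strictly_and_expands
    (C₁ C₂ : Set (ℝ × ℝ × ℝ))
    (hC₁ : IsCone C₁) (hC₂ : IsCone C₂)
    (hz₁ : ContainsZDirection C₁) (htr₁ : TransverseToXY C₁)
    (hz₂ : ContainsZDirection C₂) (htr₂ : TransverseToXY C₂)
    (h₁₂ : StrictlyContained C₁ C₂) :
    ∀ M : ℝ, 0 < M → ∃ K₀ : ℝ, 1 < K₀ ∧ ∀ K : ℝ, K₀ ≤ K →
      ∀ A : (ℝ × ℝ) →ₗ[ℝ] ℝ × ℝ, (∀ v : ℝ × ℝ, eNorm2 (A v) ≤ M * eNorm2 v) →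
      ∀ B : ℝ × ℝ, eNorm2 B ≤ M →
        (∀ p ∈ C₁, p ≠ (0 : ℝ × ℝ × ℝ) → shearMap A B K p ∈ interior C₂) ∧
        (∀ u ∈ C₂, eNorm3 u = 1 → 1 < eNorm3 (shearMap A B K u)) := by
  intro M hM
  obtain ⟨c, hc1, hc⟩ := htr₂.exists_norm_le hC₂
  obtain ⟨ε, hε, hint⟩ := hz₂.exists_mem_interior hC₂
  have hQ : 0 ≤ (2 * c + 1) * M / ε := by positivity
  refine ⟨(2 * c + 1) * M / ε + 2 * c + 1, by linarith, fun K hK A hA B hB => ?_⟩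
  have hKpos : 0 < K := by linarith
  have hcoord : ∀ p ∈ C₂, |p.1| ≤ c * |p.2.2| ∧ |p.2.1| ≤ c * |p.2.2| := fun p hp =>
    ⟨(norm_fst_le p).trans (hc p hp),
      ((norm_fst_le p.2).trans (norm_snd_le p)).trans (hc p hp)⟩
  refine ⟨fun p hp hp0 => ?_, fun u hu hu1 => ?_⟩
  · have hp2 : p ∈ C₂ := by
      rcases h₁₂ hp with h | h
      · exact interior_subset h
      · exact absurd h hp0
    have hw : 0 < |p.2.2| :=
      pos_of_mul_pos_right ((norm_pos_iff.2 hp0).trans_le (hc p hp2)) (by linarith)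
    obtain ⟨hx, hy⟩ := hcoord p hp2
    have hAv : eNorm2 (A (p.1, p.2.1)) ≤ M * (2 * (c * |p.2.2|)) :=
      (hA _).trans (mul_le_mul_of_nonneg_left (eNorm2_le hx hy) hM.le)
    have hεK : (2 * c + 1) * M < ε * K := by
      rw [mul_comm ε, ← div_lt_iff₀ hε]
      linarith
    have key : ∀ a b : ℝ, |a| ≤ eNorm2 (A (p.1, p.2.1)) → |b| ≤ eNorm2 B →
        |a + p.2.2 * b| < ε * |K * p.2.2| := by
      intro a b ha hb
      calc |a + p.2.2 * b| ≤ |a| + |p.2.2| * |b| := by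
            rw [← abs_mul]; exact abs_add_le _ _
        _ ≤ M * (2 * (c * |p.2.2|)) + |p.2.2| * M :=
            add_le_add (ha.trans hAv) (mul_le_mul_of_nonneg_left (hb.trans hB) hw.le)
        _ = (2 * c + 1) * M * |p.2.2| := by ring
        _ < ε * K * |p.2.2| := mul_lt_mul_of_pos_right hεK hw
        _ = ε * |K * p.2.2| := by rw [abs_mul, abs_of_pos hKpos, mul_assoc]
    exact hint _ (mul_ne_zero hKpos.ne' (abs_pos.1 hw))
      (key _ _ (abs_le_eNorm2 _).1 (abs_le_eNorm2 _).1)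
      (key _ _ (abs_le_eNorm2 _).2 (abs_le_eNorm2 _).2)
  · obtain ⟨hx, hy⟩ := hcoord u hu
    have hz : |u.2.2| ≤ c * |u.2.2| := le_mul_of_one_le_left (abs_nonneg _) hc1
    have hsq : ∀ a : ℝ, |a| ≤ c * |u.2.2| → a ^ 2 ≤ c ^ 2 * u.2.2 ^ 2 := fun a ha => by
      have := pow_le_pow_left₀ (abs_nonneg a) ha 2
      rwa [mul_pow, sq_abs, sq_abs] at this
    have h1 : u.1 ^ 2 + u.2.1 ^ 2 + u.2.2 ^ 2 = 1 := Real.sqrt_eq_one.1 hu1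
    have h3 : 1 ≤ 3 * (c ^ 2 * u.2.2 ^ 2) := by linarith [hsq _ hx, hsq _ hy, hsq _ hz]
    have hKc : (2 * c) ^ 2 ≤ K ^ 2 := pow_le_pow_left₀ (by linarith) (by linarith) 2
    have h4 : 1 < K ^ 2 * u.2.2 ^ 2 := by
      nlinarith [mul_le_mul_of_nonneg_right hKc (sq_nonneg u.2.2)]
    refine Real.lt_sqrt_of_sq_lt ?_
    simp only [shearMap, mul_pow]
    linarith [sq_nonneg ((A (u.1, u.2.1)).1 + u.2.2 * B.1),
      sq_nonneg ((A (u.1, u.2.1)).2 + u.2.2 * B.2)]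
end
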